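/- arXiv:1609.03043 — 6 statements merged into one kernel-verified Lean document; each statement's English description precedes it below -/
import Mathlib

section
/- Let D ⊂ ℝ³ be a bounded convex measurable set. Then ∫_{θ∈[0,2π)} ∫_{p∈ℝ} ∫_{t∈ℝ} σ(p,θ,t) dt dp dθ = 2π · vol(D), where σ(p,θ,t) is the chord length of the oriented horizontal line γ_{p,θ,t} in D and vol(D) is the three-dimensional Lebesgue measure of D. -/
open MeasureTheory Real Set

noncomputable section

/-- The oriented horizontal line `γ_{p,θ,t}` in the Heisenberg group `H₁ = ℝ³`,
parametrized by horizontal arclength `s`: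
`γ_{p,θ,t}(s) = (p cosθ + s sinθ, p sinθ − s cosθ, t + s p)`. -/
def hLine (p θ t s : ℝ) : ℝ × ℝ × ℝ :=
  (p * Real.cos θ + s * Real.sin θ, p * Real.sin θ - s * Real.cos θ, t + s * p)

lemma rot_measurePreserving (θ : ℝ) :
    MeasurePreserving (fun q : ℝ × ℝ =>
      (q.1 * Real.cos θ + q.2 * Real.sin θ, q.1 * Real.sin θ - q.2 * Real.cos θ)) := by
  have h1 := Complex.volume_preserving_equiv_real_prod
  have h2 := (Complex.conjLIE.trans (rotation (Circle.exp θ))).measurePreserving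
  have h3 := (h1.comp h2).comp (h1.symm Complex.measurableEquivRealProd)
  convert h3 using 1
  funext q
  obtain ⟨p, s⟩ := q
  have hz : Complex.measurableEquivRealProd.symm (p, s) = ⟨p, s⟩ := rfl
  simp only [Function.comp, hz, Complex.measurableEquivRealProd_apply]
  simp [rotation_apply, Circle.coe_exp, Complex.exp_ofReal_mul_I_re,
    Complex.exp_ofReal_mul_I_im]
  constructor <;> ring

lemma inner_eq (D : Set (ℝ × ℝ × ℝ)) (hmeas : MeasurableSet D) (θ : ℝ) :
    (∫⁻ p : ℝ, ∫⁻ t : ℝ, volume {s : ℝ | hLine p θ t s ∈ D}) = volume D := by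
  set f : ℝ × ℝ × ℝ → ENNReal := D.indicator 1 with hf
  have hfm : Measurable f := measurable_one.indicator hmeas
  have hl : ∀ p, Measurable (fun q : ℝ × ℝ => hLine p θ q.1 q.2) := by
    intro p; unfold hLine; fun_prop
  set g : ℝ × ℝ → ENNReal := fun q => ∫⁻ t : ℝ, f (q.1, q.2, t) with hg
  have hgm : Measurable g := by
    have : Measurable (fun r : (ℝ × ℝ) × ℝ => f (r.1.1, r.1.2, r.2)) :=
      hfm.comp (by fun_prop)
    exact this.lintegral_prod_right'
  have e1 : ∀ p : ℝ, (∫⁻ t : ℝ, volume {s : ℝ | hLine p θ t s ∈ D}) =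
      ∫⁻ s : ℝ, g (p * Real.cos θ + s * Real.sin θ, p * Real.sin θ - s * Real.cos θ) := by
    intro p
    have a1 : ∀ t, volume {s : ℝ | hLine p θ t s ∈ D} = ∫⁻ s : ℝ, f (hLine p θ t s) := by
      intro t
      have hm : MeasurableSet {s : ℝ | hLine p θ t s ∈ D} :=
        ((hl p).comp (measurable_const.prodMk measurable_id : Measurable fun s : ℝ => (t, s))) hmeas
      rw [← lintegral_indicator_one hm]
      rfl
    simp_rw [a1]
    rw [lintegral_lintegral_swap (f := fun t s => f (hLine p θ t s))
      (hfm.comp (hl p)).aemeasurable]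
    refine lintegral_congr fun s => ?_
    exact lintegral_add_right_eq_self (fun t => f (p * Real.cos θ + s * Real.sin θ,
      p * Real.sin θ - s * Real.cos θ, t)) (s * p)
  simp_rw [e1]
  have hR := rot_measurePreserving θ
  have e2 := lintegral_prod (μ := (volume : Measure ℝ)) (ν := (volume : Measure ℝ))
    _ (hgm.comp hR.measurable).aemeasurable
  refine e2.symm.trans ?_
  have e3 := hR.lintegral_comp hgm
  refine e3.trans ?_
  rw [Measure.volume_eq_prod, lintegral_prod _ hgm.aemeasurable, ← lintegral_indicator_one hmeas,
    Measure.volume_eq_prod, lintegral_prod _ hfm.aemeasurable]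
  refine lintegral_congr fun x => ?_
  rw [Measure.volume_eq_prod]
  exact (lintegral_prod (fun q : ℝ × ℝ => f (x, q))
    (hfm.comp (measurable_const.prodMk measurable_id)).aemeasurable).symm

/-- For a bounded convex measurable set `D ⊂ ℝ³`, the integral of the chord length
`σ(p,θ,t) = Leb¹{s : γ_{p,θ,t}(s) ∈ D}` over all horizontal lines (with density
`dp dθ dt`, `θ ∈ [0,2π)`) equals `2π · vol(D)`. -/
theorem chord_integral_eq_two_pi_mul_volume
    (D : Set (ℝ × ℝ × ℝ)) (hconv : Convex ℝ D)
    (hbdd : Bornology.IsBounded D) (hmeas : MeasurableSet D) :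
    (∫⁻ θ in Set.Ico (0 : ℝ) (2 * π), ∫⁻ p : ℝ, ∫⁻ t : ℝ,
        volume {s : ℝ | hLine p θ t s ∈ D}) =
      ENNReal.ofReal (2 * π) * volume D := by

  simp_rw [inner_eq D hmeas]
  rw [setLIntegral_const, Real.volume_Ico, sub_zero, mul_comm]
end
end

section
/- Let D ⊂ ℝ³ be a nonempty bounded open convex set and ℓ > 0. Then the four-dimensional Lebesgue measure of the set of positioned segments meeting D, namely of {(p,θ,t,h) ∈ ℝ × [0,2π) × ℝ × ℝ : ∃ s ∈ [h, h+ℓ], γ_{p,θ,t}(s) ∈ D}, equals 2π · vol(D) + ℓ · m(D), where vol(D) is the Lebesgue volume of D and m(D) is the three-dimensional Lebesgue measure of {(p,θ,t) ∈ ℝ × [0,2π) × ℝ : ∃ s ∈ ℝ, γ_{p,θ,t}(s) ∈ D} (the measure of the set of oriented horizontal lines meeting D). -/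
open MeasureTheory Real Set

noncomputable section

lemma aux_oneD (S : Set ℝ) (hne : S.Nonempty) (hc : Convex ℝ S) (ho : IsOpen S)
    (hb : Bornology.IsBounded S) (ℓ : ℝ) (hℓ : 0 < ℓ) :
    volume {h : ℝ | ∃ s ∈ Icc h (h + ℓ), s ∈ S} = volume S + ENNReal.ofReal ℓ := by
  have hS : S = Ioo (sInf S) (sSup S) := by
    apply Subset.antisymm
    · have h1 : S ⊆ Icc (sInf S) (sSup S) :=
        subset_Icc_csInf_csSup hb.bddBelow hb.bddAbove
      have h2 := interior_maximal h1 ho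
      rwa [interior_Icc] at h2
    · exact IsConnected.Ioo_csInf_csSup_subset ⟨hne, hc.isPreconnected⟩ hb.bddBelow hb.bddAbove
  generalize sInf S = a at hS
  generalize sSup S = b at hS
  subst hS
  have hab : a < b := nonempty_Ioo.1 hne
  have : {h : ℝ | ∃ s ∈ Icc h (h + ℓ), s ∈ Ioo a b} = Ioo (a - ℓ) b := by
    ext h
    simp only [mem_ofPred_eq, mem_Icc, mem_Ioo]
    constructor
    · rintro ⟨s, ⟨h1, h2⟩, h3, h4⟩
      constructor <;> linarith
    · rintro ⟨h1, h2⟩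
      have hlt : max a h < min b (h + ℓ) := by
        rw [max_lt_iff, lt_min_iff, lt_min_iff]
        refine ⟨⟨hab, by linarith⟩, ⟨h2, by linarith⟩⟩
      obtain ⟨s, hs1, hs2⟩ := exists_between hlt
      rw [max_lt_iff] at hs1
      rw [lt_min_iff] at hs2
      exact ⟨s, ⟨hs1.2.le, hs2.2.le⟩, hs1.1, hs2.1⟩
  rw [this, Real.volume_Ioo, Real.volume_Ioo, ← ENNReal.ofReal_add (by linarith) hℓ.le]
  congr 1
  ring

lemma aux_rot (θ : ℝ) : MeasurePreserving (fun z : ℝ × ℝ =>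
    (z.1 * Real.cos θ + z.2 * Real.sin θ, z.1 * Real.sin θ - z.2 * Real.cos θ)) := by
  refine ⟨by fun_prop, ?_⟩
  let L : ℝ × ℝ →ₗ[ℝ] ℝ × ℝ := Matrix.toLin (Module.Basis.finTwoProd ℝ)
    (Module.Basis.finTwoProd ℝ) !![Real.cos θ, Real.sin θ; Real.sin θ, - Real.cos θ]
  have hdet : LinearMap.det L = -1 := by
    simp only [L, LinearMap.det_toLin, Matrix.det_fin_two_of]
    nlinarith [Real.sin_sq_add_cos_sq θ]
  have hL : (fun z : ℝ × ℝ =>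
      (z.1 * Real.cos θ + z.2 * Real.sin θ, z.1 * Real.sin θ - z.2 * Real.cos θ)) = L := by
    ext z <;> simp only [L, Matrix.toLin_finTwoProd_apply] <;> ring
  rw [hL, Measure.map_linearMap_addHaar_eq_smul_addHaar volume (by rw [hdet]; norm_num), hdet]
  simp

lemma aux_hLine (θ : ℝ) : MeasurePreserving
    (fun w : (ℝ × ℝ) × ℝ => hLine w.1.1 θ w.2 w.1.2) := by
  have h1 : MeasurePreserving (fun w : (ℝ × ℝ) × ℝ =>
      ((w.1.1 * Real.cos θ + w.1.2 * Real.sin θ, w.1.1 * Real.sin θ - w.1.2 * Real.cos θ),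
        w.2 + w.1.2 * w.1.1)) := by
    refine (aux_rot θ).skew_product (g := fun z t => t + z.2 * z.1) (by fun_prop) ?_
    filter_upwards with z
    exact (measurePreserving_add_right volume (z.2 * z.1)).map_eq
  exact (volume_preserving_prodAssoc (α₁ := ℝ) (β₁ := ℝ) (γ₁ := ℝ)).comp h1

lemma aux_swap12 : MeasurePreserving (fun w : ℝ × ℝ × ℝ => (w.2.1, (w.1, w.2.2))) := by
  have a := volume_preserving_prodAssoc (α₁ := ℝ) (β₁ := ℝ) (γ₁ := ℝ)
  have sw : MeasurePreserving (Prod.swap : ℝ × ℝ → ℝ × ℝ) := Measure.measurePreserving_swap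
  exact (a.comp (sw.prod (MeasurePreserving.id volume))).comp a.symm

lemma aux_swap23 : MeasurePreserving (fun w : (ℝ × ℝ) × ℝ => ((w.1.1, w.2), w.1.2)) := by
  have a := volume_preserving_prodAssoc (α₁ := ℝ) (β₁ := ℝ) (γ₁ := ℝ)
  have sw : MeasurePreserving (Prod.swap : ℝ × ℝ → ℝ × ℝ) := Measure.measurePreserving_swap
  exact (a.symm.comp ((MeasurePreserving.id volume).prod sw)).comp a

lemma aux_perm : MeasurePreserving
    (fun w : (ℝ × ℝ × ℝ) × ℝ => (w.1.2.1, ((w.1.1, w.2), w.1.2.2))) := by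
  have a := volume_preserving_prodAssoc (α₁ := ℝ) (β₁ := ℝ × ℝ) (γ₁ := ℝ)
  exact (((MeasurePreserving.id volume).prod aux_swap23).comp a).comp
    (aux_swap12.prod (MeasurePreserving.id volume))

lemma aux_full : MeasurePreserving
    (fun w : (ℝ × ℝ × ℝ) × ℝ => (w.1.2.1, hLine w.1.1 w.1.2.1 w.1.2.2 w.2)) := by
  have h : MeasurePreserving
      (fun w : ℝ × ((ℝ × ℝ) × ℝ) => (w.1, hLine w.2.1.1 w.1 w.2.2 w.2.1.2)) := by
    refine (MeasurePreserving.id volume).skew_product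
      (g := fun (θ : ℝ) (w : (ℝ × ℝ) × ℝ) => hLine w.1.1 θ w.2 w.1.2) (by unfold hLine; fun_prop) ?_
    filter_upwards with θ
    exact (aux_hLine θ).map_eq
  exact h.comp aux_perm

lemma aux_assoc : MeasurePreserving
    (fun w : (ℝ × ℝ × ℝ) × ℝ => (w.1.1, w.1.2.1, w.1.2.2, w.2)) := by
  have a := volume_preserving_prodAssoc (α₁ := ℝ) (β₁ := ℝ) (γ₁ := ℝ)
  have b := volume_preserving_prodAssoc (α₁ := ℝ) (β₁ := ℝ × ℝ) (γ₁ := ℝ)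
  exact ((MeasurePreserving.id volume).prod a).comp b

lemma aux_convex (D : Set (ℝ × ℝ × ℝ)) (hconv : Convex ℝ D) (p θ t : ℝ) :
    Convex ℝ {s : ℝ | hLine p θ t s ∈ D} := by
  intro x hx y hy a b ha hb hab
  have := hconv hx hy ha hb hab
  simp only [mem_ofPred_eq]
  convert this using 1
  have hb' : b = 1 - a := by linarith
  subst hb'
  simp only [hLine, smul_eq_mul, Prod.smul_mk, Prod.mk_add_mk, Prod.mk.injEq]
  refine ⟨by ring, by ring, by ring⟩

lemma aux_bounded (D : Set (ℝ × ℝ × ℝ)) (hbdd : Bornology.IsBounded D) (p θ t : ℝ) :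
    Bornology.IsBounded {s : ℝ | hLine p θ t s ∈ D} := by
  obtain ⟨R, hR⟩ := hbdd.exists_norm_le
  refine (Metric.isBounded_Icc (-(R + R)) (R + R)).subset ?_
  intro s hs
  have h := hR _ hs
  have h1 := (norm_fst_le _).trans h
  have h2 := ((norm_fst_le _).trans (norm_snd_le _)).trans h
  simp only [hLine, Real.norm_eq_abs] at h1 h2
  set x := p * Real.cos θ + s * Real.sin θ with hx
  set y := p * Real.sin θ - s * Real.cos θ with hy
  have hs' : s = x * Real.sin θ - y * Real.cos θ := by
    rw [hx, hy]; linear_combination (-s) * Real.sin_sq_add_cos_sq θ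
  have h3 : |x * Real.sin θ| ≤ R := by
    rw [abs_mul]
    nlinarith [abs_nonneg x, Real.abs_sin_le_one θ]
  have h4 : |y * Real.cos θ| ≤ R := by
    rw [abs_mul]
    nlinarith [abs_nonneg y, Real.abs_cos_le_one θ]
  rw [abs_le] at h3 h4
  constructor <;> linarith [h3.1, h3.2, h4.1, h4.2]

/-- Kinematic measure of positioned segments of length `ℓ` meeting a nonempty bounded
open convex set `D ⊂ ℝ³`: the 4-dimensional Lebesgue measure (density `dp dθ dt dh`,
`θ ∈ [0,2π)`) of `{(p,θ,t,h) : ∃ s ∈ [h,h+ℓ], γ_{p,θ,t}(s) ∈ D}` equals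
`2π · vol(D) + ℓ · m(D)`, where `m(D)` is the measure of the set of oriented
horizontal lines meeting `D`. -/
theorem measure_segments_meeting_convex
    (D : Set (ℝ × ℝ × ℝ)) (hne : D.Nonempty) (hconv : Convex ℝ D)
    (hbdd : Bornology.IsBounded D) (hopen : IsOpen D)
    (ℓ : ℝ) (hℓ : 0 < ℓ) :
    volume {q : ℝ × ℝ × ℝ × ℝ | q.2.1 ∈ Set.Ico (0 : ℝ) (2 * π) ∧
        ∃ s ∈ Set.Icc q.2.2.2 (q.2.2.2 + ℓ), hLine q.1 q.2.1 q.2.2.1 s ∈ D} =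
      ENNReal.ofReal (2 * π) * volume D +
        ENNReal.ofReal ℓ *
          volume {q : ℝ × ℝ × ℝ | q.2.1 ∈ Set.Ico (0 : ℝ) (2 * π) ∧
            ∃ s : ℝ, hLine q.1 q.2.1 q.2.2 s ∈ D} := by
  have hcont : Continuous (fun w : (ℝ × ℝ × ℝ) × ℝ => hLine w.1.1 w.1.2.1 w.1.2.2 w.2) := by
    unfold hLine; fun_prop
  have hIco : MeasurableSet {x : ℝ × ℝ × ℝ | x.2.1 ∈ Set.Ico (0 : ℝ) (2 * π)} :=
    measurableSet_Ico.preimage (by fun_prop)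
  -- the set of lines meeting `D`
  set E : Set (ℝ × ℝ × ℝ) := {q | q.2.1 ∈ Set.Ico (0 : ℝ) (2 * π) ∧
            ∃ s : ℝ, hLine q.1 q.2.1 q.2.2 s ∈ D} with hE
  have hEm : MeasurableSet E := by
    have h1 : E = {q | q.2.1 ∈ Set.Ico (0 : ℝ) (2 * π)} ∩
        ⋃ s : ℝ, {q | hLine q.1 q.2.1 q.2.2 s ∈ D} := by
      ext q
      simp [hE]
    rw [h1]
    refine hIco.inter (IsOpen.measurableSet ?_)
    refine isOpen_iUnion fun s => hopen.preimage ?_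
    exact hcont.comp (by fun_prop : Continuous fun q : ℝ × ℝ × ℝ => (q, s))
  set A : Set (ℝ × ℝ × ℝ × ℝ) := {q | q.2.1 ∈ Set.Ico (0 : ℝ) (2 * π) ∧
        ∃ s ∈ Set.Icc q.2.2.2 (q.2.2.2 + ℓ), hLine q.1 q.2.1 q.2.2.1 s ∈ D} with hA
  have hAm : MeasurableSet A := by
    have h1 : A = {q | q.2.1 ∈ Set.Ico (0 : ℝ) (2 * π)} ∩
        ⋃ u ∈ Icc 0 ℓ, {q | hLine q.1 q.2.1 q.2.2.1 (q.2.2.2 + u) ∈ D} := by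
      ext q
      simp only [hA, mem_ofPred_eq, mem_inter_iff, mem_iUnion, exists_prop]
      refine and_congr_right fun _ => ⟨?_, ?_⟩
      · rintro ⟨s, ⟨h1, h2⟩, h3⟩
        refine ⟨s - q.2.2.2, ⟨by linarith, by linarith⟩, ?_⟩
        rwa [add_sub_cancel]
      · rintro ⟨u, ⟨h1, h2⟩, h3⟩
        exact ⟨q.2.2.2 + u, ⟨by linarith, by linarith⟩, h3⟩
    rw [h1]
    refine (measurableSet_Ico.preimage (by fun_prop)).inter (IsOpen.measurableSet ?_)
    refine isOpen_biUnion fun u _ => hopen.preimage ?_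
    exact hcont.comp (by fun_prop : Continuous fun q : ℝ × ℝ × ℝ × ℝ =>
      ((q.1, q.2.1, q.2.2.1), q.2.2.2 + u))
  -- the set of pairs (line, parameter) landing in `D`
  set B : Set ((ℝ × ℝ × ℝ) × ℝ) := {w | w.1.2.1 ∈ Set.Ico (0 : ℝ) (2 * π) ∧
      hLine w.1.1 w.1.2.1 w.1.2.2 w.2 ∈ D} with hB
  have hBm : MeasurableSet B :=
    (measurableSet_Ico.preimage (by fun_prop)).inter (hopen.preimage hcont).measurableSet
  have hBvol : volume B = ENNReal.ofReal (2 * π) * volume D := by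
    have h := aux_full.measure_preimage
      ((measurableSet_Ico (a := (0 : ℝ)) (b := 2 * π)).prod hopen.measurableSet).nullMeasurableSet
    rw [Measure.volume_eq_prod ℝ (ℝ × ℝ × ℝ), Measure.prod_prod, Real.volume_Ico, sub_zero] at h
    exact h
  rw [← hBvol, ← aux_assoc.measure_preimage hAm.nullMeasurableSet,
    Measure.volume_eq_prod (ℝ × ℝ × ℝ) ℝ,
    Measure.prod_apply (aux_assoc.measurable hAm), Measure.prod_apply hBm,
    ← lintegral_indicator_const hEm, ← lintegral_add_left (measurable_measure_prodMk_left hBm)]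
  refine lintegral_congr fun x => ?_
  obtain ⟨p, θ, t⟩ := x
  by_cases hx : (p, θ, t) ∈ E
  · rw [indicator_of_mem hx]
    obtain ⟨h1, h2⟩ := hx
    have hSo : IsOpen {s : ℝ | hLine p θ t s ∈ D} :=
      hopen.preimage (hcont.comp (by fun_prop : Continuous fun s : ℝ => ((p, θ, t), s)))
    have key := aux_oneD {s : ℝ | hLine p θ t s ∈ D} h2 (aux_convex D hconv p θ t) hSo
      (aux_bounded D hbdd p θ t) ℓ hℓ
    convert key using 2
    · ext h
      exact and_iff_right h1
    · congr 1
      ext h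
      exact and_iff_right h1
  · rw [indicator_of_notMem hx, add_zero]
    congr 1
    ext h
    constructor
    · rintro ⟨h1, s, -, h2⟩
      exact absurd ⟨h1, s, h2⟩ hx
    · rintro ⟨h1, h2⟩
      exact absurd ⟨h1, h, h2⟩ hx
end
end

section
/- Let D₁ ⊆ D₂ ⊂ ℝ³ be nonempty bounded open convex sets and ℓ > 0. Then the ratio of the four-dimensional Lebesgue measure of {(p,θ,t,h) : ∃ s ∈ [h,h+ℓ], γ_{p,θ,t}(s) ∈ D₁} to that of {(p,θ,t,h) : ∃ s ∈ [h,h+ℓ], γ_{p,θ,t}(s) ∈ D₂} (the probability that a random positioned segment of length ℓ meeting D₂ also meets D₁) equals (2π·vol(D₁) + ℓ·m(D₁)) / (2π·vol(D₂) + ℓ·m(D₂)), where vol(Dᵢ) is the Lebesgue volume of Dᵢ and m(Dᵢ) is the three-dimensional Lebesgue measure of {(p,θ,t) ∈ ℝ × [0,2π) × ℝ : ∃ s ∈ ℝ, γ_{p,θ,t}(s) ∈ Dᵢ}. -/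
open MeasureTheory Real Set

noncomputable section

/-- The set of positioned segments of length `ℓ` meeting `D` (density `dp dθ dt dh`,
`θ ∈ [0,2π)`). -/
def segMeet (D : Set (ℝ × ℝ × ℝ)) (ℓ : ℝ) : Set (ℝ × ℝ × ℝ × ℝ) :=
  {q | q.2.1 ∈ Set.Ico (0 : ℝ) (2 * π) ∧
    ∃ s ∈ Set.Icc q.2.2.2 (q.2.2.2 + ℓ), hLine q.1 q.2.1 q.2.2.1 s ∈ D}

/-- The set of oriented horizontal lines meeting `D`. -/
def lineMeet (D : Set (ℝ × ℝ × ℝ)) : Set (ℝ × ℝ × ℝ) :=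
  {q | q.2.1 ∈ Set.Ico (0 : ℝ) (2 * π) ∧ ∃ s : ℝ, hLine q.1 q.2.1 q.2.2 s ∈ D}

theorem interval_aux (S : Set ℝ) (hS : S.OrdConnected) (hne : S.Nonempty) (R : ℝ)
    (hR : ∀ s ∈ S, |s| ≤ R) (ℓ : ℝ) (hℓ : 0 < ℓ) :
    volume {h : ℝ | ∃ s ∈ Set.Icc h (h + ℓ), s ∈ S} = volume S + ENNReal.ofReal ℓ := by
  have hb : BddBelow S := ⟨-R, fun s hs => (abs_le.1 (hR s hs)).1⟩
  have ha : BddAbove S := ⟨R, fun s hs => (abs_le.1 (hR s hs)).2⟩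
  have hab : sInf S ≤ sSup S := csInf_le_csSup hne hb ha
  have hvS : volume S = ENNReal.ofReal (sSup S - sInf S) := by
    apply le_antisymm
    · rw [← Real.volume_Icc]
      exact measure_mono fun s hs => ⟨csInf_le hb hs, le_csSup ha hs⟩
    · rw [← Real.volume_Ioo]
      apply measure_mono
      rintro s ⟨h1, h2⟩
      obtain ⟨x, hx, hxs⟩ := exists_lt_of_csInf_lt hne h1
      obtain ⟨y, hy, hys⟩ := exists_lt_of_lt_csSup hne h2
      exact hS.out hx hy ⟨hxs.le, hys.le⟩
  have key : volume {h : ℝ | ∃ s ∈ Set.Icc h (h + ℓ), s ∈ S}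
      = ENNReal.ofReal (sSup S - (sInf S - ℓ)) := by
    apply le_antisymm
    · rw [← Real.volume_Icc]
      apply measure_mono
      rintro h ⟨s, ⟨h1, h2⟩, hs⟩
      have := csInf_le hb hs
      have := le_csSup ha hs
      constructor <;> linarith
    · rw [← Real.volume_Ioo]
      apply measure_mono
      rintro h ⟨h1, h2⟩
      obtain ⟨x, hx, hxs⟩ := exists_lt_of_csInf_lt hne (show sInf S < h + ℓ by linarith)
      obtain ⟨y, hy, hys⟩ := exists_lt_of_lt_csSup hne h2
      by_cases c1 : h ≤ x
      · exact ⟨x, ⟨c1, hxs.le⟩, hx⟩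
      by_cases c2 : y ≤ h + ℓ
      · exact ⟨y, ⟨hys.le, c2⟩, hy⟩
      · exact ⟨h, ⟨le_refl _, by linarith⟩, hS.out hx hy ⟨by linarith, hys.le⟩⟩
  rw [key, hvS, ← ENNReal.ofReal_add (by linarith) hℓ.le]
  congr 1
  ring

theorem slice_aux (D : Set (ℝ × ℝ × ℝ)) (hconv : Convex ℝ D)
    (hbdd : Bornology.IsBounded D) (ℓ : ℝ) (hℓ : 0 < ℓ) (p θ t : ℝ)
    (hne : ∃ s, hLine p θ t s ∈ D) :
    volume {h : ℝ | ∃ s ∈ Set.Icc h (h + ℓ), hLine p θ t s ∈ D}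
      = volume {s : ℝ | hLine p θ t s ∈ D} + ENNReal.ofReal ℓ := by
  obtain ⟨R, hR⟩ := hbdd.exists_norm_le
  refine interval_aux {s : ℝ | hLine p θ t s ∈ D} ?_ hne (R + R) ?_ ℓ hℓ
  · apply Convex.ordConnected
    intro x hx y hy a b ha hb hab
    have := hconv hx hy ha hb hab
    have e : hLine p θ t (a • x + b • y) = a • hLine p θ t x + b • hLine p θ t y := by
      obtain rfl : b = 1 - a := by linarith
      ext <;> simp [hLine] <;> ring
    show hLine p θ t (a • x + b • y) ∈ D
    rwa [e]
  · intro s hs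
    have h := hR _ hs
    have h1 := (norm_fst_le _).trans h
    have h2 := (norm_fst_le _).trans ((norm_snd_le _).trans h)
    simp only [hLine, Real.norm_eq_abs] at h1 h2
    set x := p * Real.cos θ + s * Real.sin θ
    set y := p * Real.sin θ - s * Real.cos θ
    have e : s = x * Real.sin θ - y * Real.cos θ := by
      have := Real.sin_sq_add_cos_sq θ
      simp only [x, y]
      linear_combination (-s) * this
    rw [e]
    refine (abs_sub _ _).trans ?_
    rw [abs_mul, abs_mul]
    exact add_le_add
      ((mul_le_of_le_one_right (abs_nonneg _) (Real.abs_sin_le_one θ)).trans h1)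
      ((mul_le_of_le_one_right (abs_nonneg _) (Real.abs_cos_le_one θ)).trans h2)

theorem lintegral3 (f : ℝ × ℝ × ℝ → ENNReal) (hf : Measurable f) :
    ∫⁻ x, f x = ∫⁻ p, ∫⁻ θ, ∫⁻ t, f (p, θ, t) := by
  rw [Measure.volume_eq_prod, lintegral_prod _ hf.aemeasurable]
  refine lintegral_congr fun p => ?_
  rw [Measure.volume_eq_prod]
  exact lintegral_prod _ (by fun_prop)

theorem volume4 (M : Set (ℝ × ℝ × ℝ × ℝ)) (hM : MeasurableSet M) :
    volume M = ∫⁻ x : ℝ × ℝ × ℝ, volume {h : ℝ | (x.1, x.2.1, x.2.2, h) ∈ M} := by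
  have hm : Measurable fun x : ℝ × ℝ × ℝ => volume {h : ℝ | (x.1, x.2.1, x.2.2, h) ∈ M} := by
    have : MeasurableSet ((fun y : (ℝ × ℝ × ℝ) × ℝ => (y.1.1, y.1.2.1, y.1.2.2, y.2)) ⁻¹' M) :=
      hM.preimage (by fun_prop)
    exact measurable_measure_prodMk_left this
  rw [lintegral3 _ hm, Measure.volume_eq_prod, Measure.prod_apply hM]
  refine lintegral_congr fun p => ?_
  have hp : MeasurableSet (Prod.mk p ⁻¹' M) := hM.preimage (by fun_prop)
  rw [Measure.volume_eq_prod, Measure.prod_apply hp]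
  refine lintegral_congr fun θ => ?_
  have hq : MeasurableSet (Prod.mk θ ⁻¹' (Prod.mk p ⁻¹' M)) := hp.preimage (by fun_prop)
  rw [Measure.volume_eq_prod, Measure.prod_apply hq]
  rfl

theorem rot_aux (θ : ℝ) (g : ℝ × ℝ → ENNReal) (hg : Measurable g) :
    ∫⁻ x : ℝ × ℝ, g (x.1 * Real.cos θ + x.2 * Real.sin θ, x.1 * Real.sin θ - x.2 * Real.cos θ)
      = ∫⁻ x, g x := by
  let L : ℝ × ℝ →ₗ[ℝ] ℝ × ℝ := Matrix.toLin (Module.Basis.finTwoProd ℝ) (Module.Basis.finTwoProd ℝ)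
    !![Real.cos θ, Real.sin θ; Real.sin θ, -Real.cos θ]
  have hdet : LinearMap.det L = -1 := by
    rw [LinearMap.det_toLin, Matrix.det_fin_two_of]
    have := Real.sin_sq_add_cos_sq θ
    linear_combination -this
  have hmap : Measure.map L volume = volume := by
    rw [Measure.map_linearMap_addHaar_eq_smul_addHaar _ (by rw [hdet]; norm_num), hdet]
    norm_num
  have hL : ∀ x, L x =
      (x.1 * Real.cos θ + x.2 * Real.sin θ, x.1 * Real.sin θ - x.2 * Real.cos θ) := by
    intro x
    simp only [L, Matrix.toLin_finTwoProd_apply]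
    ext <;> simp <;> ring
  have hLm : Measurable L := by
    have : (L : ℝ × ℝ → ℝ × ℝ) = _ := funext hL
    rw [this]; fun_prop
  conv_rhs => rw [← hmap, lintegral_map hg hLm]
  simp only [hL]

theorem hLine_int (θ : ℝ) (g : ℝ × ℝ × ℝ → ENNReal) (hg : Measurable g) :
    ∫⁻ p, ∫⁻ t, ∫⁻ s, g (hLine p θ t s) = ∫⁻ x, g x := by
  have hG : Measurable fun y : ℝ × ℝ => ∫⁻ z, g (y.1, y.2, z) :=
    Measurable.lintegral_prod_right' (f := fun w : (ℝ × ℝ) × ℝ => g (w.1.1, w.1.2, w.2))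
      (by fun_prop)
  have h1 : ∀ p, ∫⁻ t, ∫⁻ s, g (hLine p θ t s) = ∫⁻ s, (fun y : ℝ × ℝ => ∫⁻ z, g (y.1, y.2, z))
      (p * Real.cos θ + s * Real.sin θ, p * Real.sin θ - s * Real.cos θ) := by
    intro p
    rw [lintegral_lintegral_swap]
    · refine lintegral_congr fun s => ?_
      exact lintegral_add_right_eq_self (fun z => g (p * Real.cos θ + s * Real.sin θ,
        p * Real.sin θ - s * Real.cos θ, z)) (s * p)
    · apply Measurable.aemeasurable
      unfold hLine Function.uncurry
      fun_prop
  simp only [h1]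
  rw [lintegral3 g hg, ← lintegral_prod (μ := (volume : Measure ℝ)) (ν := (volume : Measure ℝ))
    (fun y : ℝ × ℝ => (fun y : ℝ × ℝ => ∫⁻ z, g (y.1, y.2, z))
      (y.1 * Real.cos θ + y.2 * Real.sin θ, y.1 * Real.sin θ - y.2 * Real.cos θ))
      (Measurable.aemeasurable (hG.comp (by fun_prop))), ← Measure.volume_eq_prod,
      rot_aux θ _ hG, Measure.volume_eq_prod, lintegral_prod _ hG.aemeasurable]

def posSet (D : Set (ℝ × ℝ × ℝ)) : Set (ℝ × ℝ × ℝ × ℝ) :=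
  {q | q.2.1 ∈ Set.Ico (0 : ℝ) (2 * π) ∧ hLine q.1 q.2.1 q.2.2.1 q.2.2.2 ∈ D}

theorem posSet_meas (D : Set (ℝ × ℝ × ℝ)) (hD : IsOpen D) : MeasurableSet (posSet D) := by
  refine MeasurableSet.inter (measurableSet_Ico.preimage (by fun_prop)) ?_
  exact hD.measurableSet.preimage (by unfold hLine; fun_prop)

theorem segMeet_meas (D : Set (ℝ × ℝ × ℝ)) (hD : IsOpen D) (ℓ : ℝ) :
    MeasurableSet (segMeet D ℓ) := by
  refine MeasurableSet.inter (measurableSet_Ico.preimage (by fun_prop)) ?_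
  apply IsOpen.measurableSet
  have : {q : ℝ × ℝ × ℝ × ℝ | ∃ s ∈ Set.Icc q.2.2.2 (q.2.2.2 + ℓ), hLine q.1 q.2.1 q.2.2.1 s ∈ D}
      = ⋃ u ∈ Set.Icc 0 ℓ, (fun q : ℝ × ℝ × ℝ × ℝ => hLine q.1 q.2.1 q.2.2.1 (q.2.2.2 + u)) ⁻¹' D := by
    ext q
    simp only [mem_ofPred_eq, mem_iUnion, mem_preimage, exists_prop]
    constructor
    · rintro ⟨s, ⟨h1, h2⟩, hs⟩
      exact ⟨s - q.2.2.2, ⟨by linarith, by linarith⟩, by simpa using hs⟩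
    · rintro ⟨u, ⟨h1, h2⟩, hs⟩
      exact ⟨q.2.2.2 + u, ⟨by linarith, by linarith⟩, hs⟩
  show IsOpen {q : ℝ × ℝ × ℝ × ℝ | ∃ s ∈ Set.Icc q.2.2.2 (q.2.2.2 + ℓ), hLine q.1 q.2.1 q.2.2.1 s ∈ D}
  rw [this]
  exact isOpen_biUnion fun u _ => hD.preimage (by unfold hLine; fun_prop)

theorem lineMeet_meas (D : Set (ℝ × ℝ × ℝ)) (hD : IsOpen D) :
    MeasurableSet (lineMeet D) := by
  refine MeasurableSet.inter (measurableSet_Ico.preimage (by fun_prop)) ?_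
  apply IsOpen.measurableSet
  have : {q : ℝ × ℝ × ℝ | ∃ s, hLine q.1 q.2.1 q.2.2 s ∈ D}
      = ⋃ u, (fun q : ℝ × ℝ × ℝ => hLine q.1 q.2.1 q.2.2 u) ⁻¹' D := by
    ext q
    simp
  show IsOpen {q : ℝ × ℝ × ℝ | ∃ s, hLine q.1 q.2.1 q.2.2 s ∈ D}
  rw [this]
  exact isOpen_iUnion fun u => hD.preimage (by unfold hLine; fun_prop)

theorem slice_meas (M : Set (ℝ × ℝ × ℝ × ℝ)) (hM : MeasurableSet M) :
    Measurable fun x : ℝ × ℝ × ℝ => volume {h : ℝ | (x.1, x.2.1, x.2.2, h) ∈ M} := by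
  have : MeasurableSet ((fun y : (ℝ × ℝ × ℝ) × ℝ => (y.1.1, y.1.2.1, y.1.2.2, y.2)) ⁻¹' M) :=
    hM.preimage (by fun_prop)
  exact measurable_measure_prodMk_left this

theorem posSet_vol (D : Set (ℝ × ℝ × ℝ)) (hD : IsOpen D) :
    volume (posSet D) = ENNReal.ofReal (2 * π) * volume D := by
  have hM := posSet_meas D hD
  have hg : Measurable (D.indicator (1 : ℝ × ℝ × ℝ → ENNReal)) :=
    measurable_one.indicator hD.measurableSet
  rw [volume4 _ hM, lintegral3 _ (slice_meas _ hM), lintegral_lintegral_swap]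
  · have : ∀ θ, ∫⁻ p, ∫⁻ t, volume {h : ℝ | (p, θ, t, h) ∈ posSet D}
        = (Set.Ico (0:ℝ) (2 * π)).indicator (fun _ => volume D) θ := by
      intro θ
      by_cases hθ : θ ∈ Set.Ico (0:ℝ) (2 * π)
      · rw [indicator_of_mem hθ, ← lintegral_indicator_one hD.measurableSet, ← hLine_int θ _ hg]
        refine lintegral_congr fun p => lintegral_congr fun t => ?_
        have hm : MeasurableSet {h : ℝ | hLine p θ t h ∈ D} :=
          hD.measurableSet.preimage (by unfold hLine; fun_prop)
        have e : {h : ℝ | (p, θ, t, h) ∈ posSet D} = {h : ℝ | hLine p θ t h ∈ D} := by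
          ext h
          exact and_iff_right hθ
        rw [e, ← lintegral_indicator_one hm]
        rfl
      · rw [indicator_of_notMem hθ]
        have e : ∀ p t, {h : ℝ | (p, θ, t, h) ∈ posSet D} = ∅ := by
          intro p t
          ext h
          simp only [mem_ofPred_eq, mem_empty_iff_false, iff_false]
          exact fun h => hθ h.1
        simp [e]
    simp only [this]
    rw [lintegral_indicator measurableSet_Ico, setLIntegral_const, Real.volume_Ico, mul_comm,
      sub_zero]
  · apply Measurable.aemeasurable
    exact Measurable.lintegral_prod_right'
      (f := fun w : (ℝ × ℝ) × ℝ => volume {h : ℝ | (w.1.1, w.1.2, w.2, h) ∈ posSet D})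
      ((slice_meas _ hM).comp (g := fun x : ℝ × ℝ × ℝ => _)
        (f := fun w : (ℝ × ℝ) × ℝ => (w.1.1, w.1.2, w.2)) (by fun_prop))

theorem segMeet_vol (D : Set (ℝ × ℝ × ℝ)) (hconv : Convex ℝ D)
    (hbdd : Bornology.IsBounded D) (hD : IsOpen D) (ℓ : ℝ) (hℓ : 0 < ℓ) :
    volume (segMeet D ℓ) =
      ENNReal.ofReal (2 * π) * volume D + ENNReal.ofReal ℓ * volume (lineMeet D) := by
  have hl := lineMeet_meas D hD
  rw [← posSet_vol D hD, volume4 _ (posSet_meas D hD), volume4 _ (segMeet_meas D hD ℓ),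
    ← lintegral_indicator_const hl, ← lintegral_add_left (slice_meas _ (posSet_meas D hD))]
  refine lintegral_congr fun x => ?_
  obtain ⟨p, θ, t⟩ := x
  by_cases hx : (p, θ, t) ∈ lineMeet D
  · rw [indicator_of_mem hx]
    obtain ⟨hθ, hs⟩ := hx
    have e1 : {h : ℝ | (p, θ, t, h) ∈ posSet D} = {h : ℝ | hLine p θ t h ∈ D} := by
      ext h
      exact and_iff_right hθ
    have e2 : {h : ℝ | (p, θ, t, h) ∈ segMeet D ℓ}
        = {h : ℝ | ∃ s ∈ Set.Icc h (h + ℓ), hLine p θ t s ∈ D} := by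
      ext h
      exact and_iff_right hθ
    simp only [e1, e2]
    exact slice_aux D hconv hbdd ℓ hℓ p θ t hs
  · rw [indicator_of_notMem hx]
    have e1 : {h : ℝ | (p, θ, t, h) ∈ posSet D} = ∅ := by
      ext h
      simp only [mem_ofPred_eq, mem_empty_iff_false, iff_false]
      exact fun h' => hx ⟨h'.1, _, h'.2⟩
    have e2 : {h : ℝ | (p, θ, t, h) ∈ segMeet D ℓ} = ∅ := by
      ext h
      simp only [mem_ofPred_eq, mem_empty_iff_false, iff_false]
      rintro ⟨h1, s, -, hs⟩
      exact hx ⟨h1, s, hs⟩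
    simp only [e1, e2, add_zero]

/-- Containment probability: for nonempty bounded open convex `D₁ ⊆ D₂ ⊂ ℝ³`, the
probability that a random positioned segment of length `ℓ` meeting `D₂` also meets
`D₁` is `(2π·vol(D₁) + ℓ·m(D₁)) / (2π·vol(D₂) + ℓ·m(D₂))`. -/
theorem prob_segment_meets_inner_convex
    (D₁ D₂ : Set (ℝ × ℝ × ℝ)) (hsub : D₁ ⊆ D₂)
    (hne₁ : D₁.Nonempty) (hconv₁ : Convex ℝ D₁)
    (hbdd₁ : Bornology.IsBounded D₁) (hopen₁ : IsOpen D₁)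
    (hne₂ : D₂.Nonempty) (hconv₂ : Convex ℝ D₂)
    (hbdd₂ : Bornology.IsBounded D₂) (hopen₂ : IsOpen D₂)
    (ℓ : ℝ) (hℓ : 0 < ℓ) :
    volume (segMeet D₁ ℓ) / volume (segMeet D₂ ℓ) =
      (ENNReal.ofReal (2 * π) * volume D₁ + ENNReal.ofReal ℓ * volume (lineMeet D₁)) /
        (ENNReal.ofReal (2 * π) * volume D₂ + ENNReal.ofReal ℓ * volume (lineMeet D₂)) := by
  rw [segMeet_vol D₁ hconv₁ hbdd₁ hopen₁ ℓ hℓ, segMeet_vol D₂ hconv₂ hbdd₂ hopen₂ ℓ hℓ]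
end
end

section
/- Let Φ = Φ_{(a,b,c),α} be a pseudohermitian transformation of H₁. Then the image under Φ of the oriented horizontal line γ_{p,θ,t} is again the image of an oriented horizontal line: there exists t' ∈ ℝ such that Φ(γ_{p,θ,t}(ℝ)) = γ_{p',θ',t'}(ℝ), where θ' ≡ θ + α (mod 2π) and p' = p + a cosθ' + b sinθ'. -/
open Real Set

noncomputable section

/-- Rotation `R_α` by angle `α` about the `t`-axis. -/
def rot (α : ℝ) (q : ℝ × ℝ × ℝ) : ℝ × ℝ × ℝ :=
  (q.1 * Real.cos α - q.2.1 * Real.sin α, q.1 * Real.sin α + q.2.1 * Real.cos α, q.2.2)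

/-- Heisenberg left translation `L_{(a,b,c)}(x,y,t) = (a+x, b+y, c+t+bx−ay)`. -/
def heisL (Q q : ℝ × ℝ × ℝ) : ℝ × ℝ × ℝ :=
  (Q.1 + q.1, Q.2.1 + q.2.1, Q.2.2 + q.2.2 + Q.2.1 * q.1 - Q.1 * q.2.1)

/-- Pseudohermitian transformation `Φ_{Q,α} = L_Q ∘ R_α`. -/
def psh (Q : ℝ × ℝ × ℝ) (α : ℝ) (q : ℝ × ℝ × ℝ) : ℝ × ℝ × ℝ :=
  heisL Q (rot α q)

/-- A pseudohermitian transformation `Φ_{(a,b,c),α}` maps the image of the oriented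
horizontal line `γ_{p,θ,t}` onto the image of an oriented horizontal line
`γ_{p',θ',t'}`, where `θ' ≡ θ + α (mod 2π)` and `p' = p + a cosθ' + b sinθ'`. -/
theorem psh_image_hLine
    (a b c α p θ t : ℝ) (hθ : θ ∈ Set.Ico (0 : ℝ) (2 * π)) :
    ∃ t' θ' : ℝ, θ' ∈ Set.Ico (0 : ℝ) (2 * π) ∧
      (∃ k : ℤ, θ' = θ + α + 2 * π * k) ∧
      psh (a, b, c) α '' Set.range (hLine p θ t) =
        Set.range (hLine (p + a * Real.cos θ' + b * Real.sin θ') θ' t') := by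
  obtain ⟨θ', hθ', k, hk⟩ : ∃ θ' : ℝ, θ' ∈ Set.Ico (0 : ℝ) (2 * π) ∧
      ∃ k : ℤ, θ' = θ + α + 2 * π * k := by
    refine ⟨toIcoMod Real.two_pi_pos 0 (θ + α), ?_, -toIcoDiv Real.two_pi_pos 0 (θ + α), ?_⟩
    · simpa using toIcoMod_mem_Ico Real.two_pi_pos 0 (θ + α)
    · rw [toIcoMod, zsmul_eq_mul]
      push_cast
      ring
  have hk2 : θ' = θ + α + k * (2 * π) := by rw [hk]; ring
  have hC : Real.cos θ' = Real.cos θ * Real.cos α - Real.sin θ * Real.sin α := by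
    rw [hk2, Real.cos_add_int_mul_two_pi, Real.cos_add]
  have hS : Real.sin θ' = Real.sin θ * Real.cos α + Real.cos θ * Real.sin α := by
    rw [hk2, Real.sin_add_int_mul_two_pi, Real.sin_add]
  have h1 := Real.sin_sq_add_cos_sq θ'
  set d : ℝ := a * Real.sin θ' - b * Real.cos θ' with hd
  set p' : ℝ := p + a * Real.cos θ' + b * Real.sin θ' with hp
  have key : ∀ s : ℝ, psh (a, b, c) α (hLine p θ t s) =
      hLine p' θ' (c + t - p * d - d * p') (s + d) := by
    intro s
    have e1 : (hLine p θ t s).1 * Real.cos α - (hLine p θ t s).2.1 * Real.sin α =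
        p * Real.cos θ' + s * Real.sin θ' := by
      simp only [hLine]; rw [hC, hS]; ring
    have e2 : (hLine p θ t s).1 * Real.sin α + (hLine p θ t s).2.1 * Real.cos α =
        p * Real.sin θ' - s * Real.cos θ' := by
      simp only [hLine]; rw [hC, hS]; ring
    have e3 : (hLine p θ t s).2.2 = t + s * p := rfl
    simp only [psh, heisL, rot]
    rw [e1, e2, e3]
    simp only [hLine, Prod.mk.injEq]
    refine ⟨?_, ?_, ?_⟩
    · rw [hp, hd]; linear_combination -a * h1
    · rw [hp, hd]; linear_combination -b * h1
    · rw [hp, hd]; ring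
  refine ⟨c + t - p * d - d * p', θ', hθ', ⟨k, hk⟩, ?_⟩
  ext q
  constructor
  · rintro ⟨_, ⟨s, rfl⟩, rfl⟩
    exact ⟨s + d, (key s).symm⟩
  · rintro ⟨s, rfl⟩
    refine ⟨_, ⟨s - d, rfl⟩, ?_⟩
    rw [key, sub_add_cancel]
end
end

section
/- Let Φ = Φ_{(a,b,c),α} be a pseudohermitian transformation of H₁, and let T_Φ : ℝ × [0,2π) × ℝ → ℝ × [0,2π) × ℝ be the induced map on the parameter space of oriented horizontal lines, i.e. T_Φ(p,θ,t) = (p',θ',t') where (p',θ',t') are the unique parameters with Φ(γ_{p,θ,t}(ℝ)) = γ_{p',θ',t'}(ℝ) and Φ mapping the orientation of γ_{p,θ,t} to that of γ_{p',θ',t'}. Then T_Φ is a measure-preserving bijection for the Lebesgue measure dp dθ dt on ℝ × [0,2π) × ℝ; hence the density dG = dp ∧ dθ ∧ dt for sets of horizontal lines is invariant under the group PSH(1) of pseudohermitian transformations. -/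
open MeasureTheory Real Set

noncomputable section

/-- The parameter space `ℝ × [0,2π) × ℝ` of oriented horizontal lines. -/
def lineParams : Set (ℝ × ℝ × ℝ) := {q | q.2.1 ∈ Set.Ico (0 : ℝ) (2 * π)}


/-- The candidate inverse of the induced map, on the branch `n` of the angle. -/
def invMap (a b c α : ℝ) (n : ℤ) (q : ℝ × ℝ × ℝ) : ℝ × ℝ × ℝ :=
  (q.1 - (a * Real.cos q.2.1 + b * Real.sin q.2.1), q.2.1 + (-α + n * (2 * π)),
    q.2.2 + (-c + 2 * (q.1 - (a * Real.cos q.2.1 + b * Real.sin q.2.1)) *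
      (a * Real.sin q.2.1 - b * Real.cos q.2.1) +
      (a * Real.sin q.2.1 - b * Real.cos q.2.1) * (a * Real.cos q.2.1 + b * Real.sin q.2.1)))

theorem mp_shear (k : ℝ → ℝ) (hk : Measurable k) :
    MeasurePreserving (fun q : ℝ × ℝ × ℝ => (q.1 - k q.2.1, q.2.1, q.2.2)) volume volume := by
  have h1 : MeasurePreserving (fun q : (ℝ × ℝ) × ℝ => (q.1, q.2 - k q.1.1))
      (volume.prod volume) (volume.prod volume) := by
    refine MeasurePreserving.skew_product (f := fun x : ℝ × ℝ => x)
      (g := fun (x : ℝ × ℝ) (y : ℝ) => y - k x.1) (MeasurePreserving.id _) ?_ ?_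
    · simp only [Function.uncurry_def]; fun_prop
    · exact Filter.Eventually.of_forall fun x =>
        (measurePreserving_sub_right volume (k x.1)).map_eq
  have h2 := (Measure.measurePreserving_swap (μ := (volume : Measure (ℝ × ℝ)))
    (ν := (volume : Measure ℝ))).comp (h1.comp (Measure.measurePreserving_swap
      (μ := (volume : Measure ℝ)) (ν := (volume : Measure (ℝ × ℝ)))))
  exact h2

theorem mp_shear2 (β : ℝ) (f : ℝ → ℝ → ℝ) (hf : Measurable (Function.uncurry f)) :
    MeasurePreserving (fun q : ℝ × ℝ × ℝ => (q.1, q.2.1 + β, q.2.2 + f q.1 q.2.1))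
      volume volume := by
  have hf' : Measurable (fun q : ℝ × ℝ × ℝ => f q.1 q.2.1) :=
    hf.comp (f := fun q : ℝ × ℝ × ℝ => (q.1, q.2.1)) (by fun_prop)
  refine MeasurePreserving.skew_product (μa := (volume : Measure ℝ)) (μb := (volume : Measure ℝ))
    (μc := (volume : Measure (ℝ × ℝ))) (μd := (volume : Measure (ℝ × ℝ)))
    (f := fun x : ℝ => x)
    (g := fun (x : ℝ) (y : ℝ × ℝ) => (y.1 + β, y.2 + f x y.1)) (MeasurePreserving.id _) ?_ ?_
  · simp only [Function.uncurry_def]; fun_prop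
  · refine Filter.Eventually.of_forall fun x => ?_
    have hfx : Measurable (f x) := hf.comp (f := fun y : ℝ => (x, y)) (by fun_prop)
    refine (MeasurePreserving.skew_product (μa := (volume : Measure ℝ))
      (μb := (volume : Measure ℝ)) (μc := (volume : Measure ℝ)) (μd := (volume : Measure ℝ))
      (f := fun y : ℝ => y + β) (g := fun (y : ℝ) (z : ℝ) => z + f x y)
      (measurePreserving_add_right volume β) ?_ ?_).map_eq
    · simp only [Function.uncurry_def]; fun_prop
    · exact Filter.Eventually.of_forall fun y =>
        (measurePreserving_add_right volume (f x y)).map_eq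

theorem mp_invMap (a b c α : ℝ) (n : ℤ) :
    MeasurePreserving (invMap a b c α n) volume volume := by
  have h1 := mp_shear (fun θ => a * Real.cos θ + b * Real.sin θ) (by fun_prop)
  have h2 := mp_shear2 (-α + n * (2 * π)) (fun p θ => -c + 2 * p *
      (a * Real.sin θ - b * Real.cos θ) +
      (a * Real.sin θ - b * Real.cos θ) * (a * Real.cos θ + b * Real.sin θ))
      (by simp only [Function.uncurry_def]; fun_prop)
  exact h2.comp h1

theorem invMap_inj (a b c α : ℝ) (n : ℤ) : Function.Injective (invMap a b c α n) := by
  rintro ⟨p, θ, t⟩ ⟨p', θ', t'⟩ h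
  simp only [invMap, Prod.mk.injEq] at h
  obtain ⟨h1, h2, h3⟩ := h
  have : θ = θ' := by linarith
  subst this
  have : p = p' := by linarith
  subst this
  have : t = t' := by linarith
  subst this
  rfl

theorem branch_unique (x : ℝ) (n m : ℤ) (hx : x + n * (2 * π) ∈ Set.Ico (0 : ℝ) (2 * π))
    (hy : x + m * (2 * π) ∈ Set.Ico (0 : ℝ) (2 * π)) : n = m := by
  have h := existsUnique_add_zsmul_mem_Ico Real.two_pi_pos x 0
  refine h.unique ?_ ?_
  · simpa using hx
  · simpa using hy

theorem branch_exists (x : ℝ) : ∃ n : ℤ, x + n * (2 * π) ∈ Set.Ico (0 : ℝ) (2 * π) := by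
  obtain ⟨n, hn, -⟩ := existsUnique_add_zsmul_mem_Ico Real.two_pi_pos x 0
  exact ⟨n, by simpa using hn⟩

theorem invMap_branch (a b c α : ℝ) (n m : ℤ) (y : ℝ × ℝ × ℝ)
    (h1 : invMap a b c α n y ∈ lineParams) (h2 : invMap a b c α m y ∈ lineParams) : n = m := by
  refine branch_unique (y.2.1 - α) n m ?_ ?_
  · have : y.2.1 + (-α + n * (2 * π)) ∈ Set.Ico (0 : ℝ) (2 * π) := h1
    convert this using 1; ring
  · have : y.2.1 + (-α + m * (2 * π)) ∈ Set.Ico (0 : ℝ) (2 * π) := h2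
    convert this using 1; ring

theorem key (a b c α p θ t p' θ' t' h₀ : ℝ)
    (h : ∀ s : ℝ, psh (a, b, c) α (hLine p θ t s) = hLine p' θ' t' (s + h₀)) :
    ∃ n : ℤ, invMap a b c α n (p', θ', t') = (p, θ, t) := by
  have e0 := h 0
  have e1 := h 1
  simp only [psh, heisL, rot, hLine, Prod.mk.injEq] at e0 e1
  obtain ⟨a0, b0, c0⟩ := e0
  obtain ⟨a1, b1, c1⟩ := e1
  have hs : Real.sin θ' = Real.sin (θ + α) := by rw [Real.sin_add]; linarith
  have hc : Real.cos θ' = Real.cos (θ + α) := by rw [Real.cos_add]; linarith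
  have hang := Real.Angle.cos_sin_inj hc hs
  obtain ⟨n, hn⟩ := Real.Angle.angle_eq_iff_two_pi_dvd_sub.1 hang
  refine ⟨-n, ?_⟩
  have A0 : a + p * Real.cos θ' = p' * Real.cos θ' + h₀ * Real.sin θ' := by
    have := hc; rw [Real.cos_add] at this
    linear_combination a0 + p * this
  have B0 : b + p * Real.sin θ' = p' * Real.sin θ' - h₀ * Real.cos θ' := by
    have := hs; rw [Real.sin_add] at this
    linear_combination b0 + p * this
  have C0 : c + t + b * (p * Real.cos θ') - a * (p * Real.sin θ') = t' + h₀ * p' := by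
    have h1 := hs; rw [Real.sin_add] at h1
    have h2 := hc; rw [Real.cos_add] at h2
    linear_combination c0 + b * p * h2 - a * p * h1
  have one := Real.sin_sq_add_cos_sq θ'
  have P : p' = p + (a * Real.cos θ' + b * Real.sin θ') := by
    linear_combination -Real.cos θ' * A0 - Real.sin θ' * B0 + (p - p') * one
  have H : h₀ = a * Real.sin θ' - b * Real.cos θ' := by
    linear_combination -Real.sin θ' * A0 + Real.cos θ' * B0 - h₀ * one
  have T1 : t' = c + t - p * h₀ - h₀ * p' := by
    linear_combination -C0 + p * H
  simp only [invMap, Prod.mk.injEq]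
  refine ⟨by linarith, by push_cast; linarith, ?_⟩
  rw [← H, T1, P]
  ring

/-- The map `T_Φ` induced on the parameter space of oriented horizontal lines by a
pseudohermitian transformation `Φ = Φ_{(a,b,c),α}` (sending `γ_{p,θ,t}`, with its
orientation, to the line `Φ ∘ γ_{p,θ,t}`) is a bijection of `ℝ × [0,2π) × ℝ` onto
itself preserving the Lebesgue measure `dp dθ dt`: the density of horizontal lines
is invariant under `PSH(1)`. -/
theorem induced_line_map_measure_preserving
    (a b c α : ℝ) (T : ℝ × ℝ × ℝ → ℝ × ℝ × ℝ)
    (hT : ∀ p θ t : ℝ, θ ∈ Set.Ico (0 : ℝ) (2 * π) →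
      (T (p, θ, t)).2.1 ∈ Set.Ico (0 : ℝ) (2 * π) ∧
      ∃ h₀ : ℝ, ∀ s : ℝ,
        psh (a, b, c) α (hLine p θ t s) =
          hLine (T (p, θ, t)).1 (T (p, θ, t)).2.1 (T (p, θ, t)).2.2 (s + h₀)) :
    Set.BijOn T lineParams lineParams ∧
      ∀ A : Set (ℝ × ℝ × ℝ), MeasurableSet A → A ⊆ lineParams →
        volume (T '' A) = volume A := by
  have hmap : ∀ x ∈ lineParams, T x ∈ lineParams ∧ ∃ n : ℤ, invMap a b c α n (T x) = x := by
    rintro ⟨p, θ, t⟩ hx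
    obtain ⟨h1, h₀, h2⟩ := hT p θ t hx
    exact ⟨h1, key a b c α p θ t _ _ _ h₀ h2⟩
  have hinv : ∀ y ∈ lineParams, ∀ n : ℤ, invMap a b c α n y ∈ lineParams →
      T (invMap a b c α n y) = y := by
    intro y hy n hx
    obtain ⟨h1, m, hm⟩ := hmap _ hx
    have e : (T (invMap a b c α n y)).2.1 + (-α + m * (2 * π)) =
      y.2.1 + (-α + n * (2 * π)) := congrArg (fun q => q.2.1) hm
    have hmn : m - n = 0 := by
      refine branch_unique (T (invMap a b c α n y)).2.1 (m - n) 0 ?_ ?_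
      · have : y.2.1 ∈ Set.Ico (0 : ℝ) (2 * π) := hy
        convert this using 1
        push_cast; linarith
      · have : (T (invMap a b c α n y)).2.1 ∈ Set.Ico (0 : ℝ) (2 * π) := h1
        simpa using this
    have : m = n := by omega
    subst this
    exact invMap_inj a b c α m hm
  have hinj : Set.InjOn T lineParams := by
    intro x hx x' hx' e
    obtain ⟨-, n, hn⟩ := hmap x hx
    obtain ⟨-, m, hm⟩ := hmap x' hx'
    rw [← e] at hm
    have : n = m := invMap_branch a b c α n m (T x) (by rwa [hn]) (by rwa [hm])
    rw [← hn, ← hm, this]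
  refine ⟨⟨fun x hx => (hmap x hx).1, hinj, ?_⟩, ?_⟩
  · intro y hy
    obtain ⟨n, hn⟩ := branch_exists (y.2.1 - α)
    have hx : invMap a b c α n y ∈ lineParams := by
      show y.2.1 + (-α + n * (2 * π)) ∈ Set.Ico (0 : ℝ) (2 * π)
      convert hn using 1; ring
    exact ⟨_, hx, hinv y hy n hx⟩
  · intro A hA hAL
    let B : ℤ → Set (ℝ × ℝ × ℝ) := fun n =>
      A ∩ {q | q.2.1 + α - n * (2 * π) ∈ Set.Ico (0 : ℝ) (2 * π)}
    have hB : ∀ n, MeasurableSet (B n) := fun n =>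
      hA.inter (measurableSet_Ico.preimage (by fun_prop))
    have hBA : A = ⋃ n, B n := by
      ext x
      simp only [B, mem_iUnion, mem_inter_iff, mem_ofPred_eq, exists_and_left, iff_self_and]
      intro _
      obtain ⟨n, hn⟩ := branch_exists (x.2.1 + α)
      refine ⟨-n, ?_⟩
      convert hn using 1; push_cast; ring
    have hBd : Pairwise (Function.onFun Disjoint B) := by
      intro n m hnm
      refine Set.disjoint_left.2 fun x hx hx' => hnm ?_
      have g1 : x.2.1 + α - n * (2 * π) ∈ Set.Ico (0 : ℝ) (2 * π) := hx.2
      have g2 : x.2.1 + α - m * (2 * π) ∈ Set.Ico (0 : ℝ) (2 * π) := hx'.2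
      have := branch_unique (x.2.1 + α) (-n) (-m)
        (by convert g1 using 1; push_cast; ring) (by convert g2 using 1; push_cast; ring)
      omega
    have hpre : ∀ n y, invMap a b c α n y ∈ B n → y ∈ lineParams := by
      intro n y hy
      have h : y.2.1 + (-α + n * (2 * π)) + α - n * (2 * π) ∈ Set.Ico (0 : ℝ) (2 * π) := hy.2
      show y.2.1 ∈ Set.Ico (0 : ℝ) (2 * π)
      convert h using 1; ring
    have hTA : T '' A = ⋃ n, invMap a b c α n ⁻¹' B n := by
      ext y
      simp only [mem_image, mem_iUnion, mem_preimage]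
      constructor
      · rintro ⟨x, hx, rfl⟩
        obtain ⟨h1, n, hn⟩ := hmap x (hAL hx)
        refine ⟨n, by rwa [hn], ?_⟩
        show (T x).2.1 + (-α + n * (2 * π)) + α - n * (2 * π) ∈ Set.Ico (0 : ℝ) (2 * π)
        have : (T x).2.1 ∈ Set.Ico (0 : ℝ) (2 * π) := h1
        convert this using 1; ring
      · rintro ⟨n, hn⟩
        exact ⟨_, hn.1, hinv y (hpre n y hn) n (hAL hn.1)⟩
    rw [hTA, measure_iUnion]
    · conv_rhs => rw [hBA, measure_iUnion hBd hB]
      exact tsum_congr fun n =>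
        (mp_invMap a b c α n).measure_preimage (hB n).nullMeasurableSet
    · intro n m hnm
      refine Set.disjoint_left.2 fun y hy hy' => hnm ?_
      exact invMap_branch a b c α n m y (hAL hy.1) (hAL hy'.1)
    · exact fun n => (mp_invMap a b c α n).measurable (hB n)
end
end

section
/- The map Ψ : ℝ × [0,2π) × ℝ × ℝ → ℝ³ × [0,2π) defined by Ψ(p,θ,t,h) = (γ_{p,θ,t}(h), θ) = (p cosθ + h sinθ, p sinθ − h cosθ, t + hp, θ) is a bijection, and it pushes the four-dimensional Lebesgue measure dp dθ dt dh forward to the Lebesgue measure da db dc dφ on ℝ³ × [0,2π); equivalently, the kinematic density dK = da ∧ db ∧ dc ∧ dφ of the group of rigid motions equals dG ∧ dh = dp ∧ dθ ∧ dt ∧ dh in these coordinates. -/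
open MeasureTheory Real Set

noncomputable section

/-- The change of coordinates `Ψ(p,θ,t,h) = (γ_{p,θ,t}(h), θ)
= ((p cosθ + h sinθ, p sinθ − h cosθ, t + hp), θ)` from line coordinates `(p,θ,t,h)`
to rigid-motion coordinates `((a,b,c),φ)`. -/
def kinemCoord (q : ℝ × ℝ × ℝ × ℝ) : (ℝ × ℝ × ℝ) × ℝ :=
  (hLine q.1 q.2.1 q.2.2.1 q.2.2.2, q.2.1)

/-- The planar reflection `(h, p) ↦ (p cosθ + h sinθ, p sinθ − h cosθ)` preserves area. -/
lemma planar_mp (θ : ℝ) : MeasurePreserving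
    (fun x : ℝ × ℝ => (x.2 * Real.cos θ + x.1 * Real.sin θ,
      x.2 * Real.sin θ - x.1 * Real.cos θ)) volume volume := by
  let L := Matrix.toLin (Module.Basis.finTwoProd ℝ) (Module.Basis.finTwoProd ℝ)
    !![Real.sin θ, Real.cos θ; -Real.cos θ, Real.sin θ]
  have hdet : LinearMap.det L = 1 := by
    simp only [L, LinearMap.det_toLin, Matrix.det_fin_two_of]
    nlinarith [Real.sin_sq_add_cos_sq θ]
  have hL : (fun x : ℝ × ℝ => (x.2 * Real.cos θ + x.1 * Real.sin θ,
      x.2 * Real.sin θ - x.1 * Real.cos θ)) = L := by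
    funext x
    simp only [L, Matrix.toLin_finTwoProd_apply]
    ext <;> simp <;> ring
  refine ⟨by fun_prop, ?_⟩
  rw [hL, Measure.map_linearMap_addHaar_eq_smul_addHaar _ (by rw [hdet]; exact one_ne_zero), hdet]
  simp

/-- For fixed `θ`, the map `(t, (h, p)) ↦ γ_{p,θ,t}(h)` preserves volume. -/
lemma hLine_mp (θ : ℝ) : MeasurePreserving
    (fun x : ℝ × ℝ × ℝ => hLine x.2.2 θ x.1 x.2.1) volume volume := by
  have h1 : MeasurePreserving (Prod.swap : ℝ × (ℝ × ℝ) → (ℝ × ℝ) × ℝ) volume volume :=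
    Measure.measurePreserving_swap
  have h2 : MeasurePreserving (fun x : (ℝ × ℝ) × ℝ =>
      ((x.1.2 * Real.cos θ + x.1.1 * Real.sin θ,
        x.1.2 * Real.sin θ - x.1.1 * Real.cos θ), x.2 + x.1.1 * x.1.2)) volume volume := by
    refine (planar_mp θ).skew_product (g := fun (y : ℝ × ℝ) (t : ℝ) => t + y.1 * y.2)
      (by fun_prop) (Filter.Eventually.of_forall fun y => ?_)
    exact map_add_right_eq_self volume (y.1 * y.2)
  have h3 : MeasurePreserving (MeasurableEquiv.prodAssoc : (ℝ × ℝ) × ℝ ≃ᵐ ℝ × ℝ × ℝ)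
      volume volume := volume_preserving_prodAssoc
  exact h3.comp (h2.comp h1)

lemma kinemCoord_mp : MeasurePreserving kinemCoord volume volume := by
  have h1 : MeasurePreserving (Prod.swap : ℝ × (ℝ × ℝ × ℝ) → (ℝ × ℝ × ℝ) × ℝ) volume volume :=
    Measure.measurePreserving_swap
  have h2 : MeasurePreserving
      (MeasurableEquiv.prodAssoc : (ℝ × (ℝ × ℝ)) × ℝ ≃ᵐ ℝ × (ℝ × ℝ) × ℝ)
      volume volume := volume_preserving_prodAssoc
  have h3 : MeasurePreserving
      (MeasurableEquiv.prodAssoc : (ℝ × ℝ) × ℝ ≃ᵐ ℝ × ℝ × ℝ)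
      volume volume := volume_preserving_prodAssoc
  have h4 : MeasurePreserving (fun x : ℝ × (ℝ × ℝ × ℝ) =>
      (x.1, hLine x.2.2.2 x.1 x.2.1 x.2.2.1)) volume volume := by
    refine (MeasurePreserving.id volume).skew_product
      (g := fun (θ : ℝ) (x : ℝ × ℝ × ℝ) => hLine x.2.2 θ x.1 x.2.1)
      (by unfold hLine; fun_prop) (Filter.Eventually.of_forall fun θ => (hLine_mp θ).map_eq)
  have h5 : MeasurePreserving (Prod.swap : ℝ × (ℝ × ℝ × ℝ) → (ℝ × ℝ × ℝ) × ℝ) volume volume :=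
    Measure.measurePreserving_swap
  exact h5.comp (h4.comp ((((MeasurePreserving.id volume).prod h3).comp h2).comp h1))

/-- `Ψ` is a bijection from `ℝ × [0,2π) × ℝ × ℝ` (coordinates `(p,θ,t,h)`) onto
`ℝ³ × [0,2π)` (coordinates `((a,b,c),φ)`), pushing the Lebesgue measure
`dp dθ dt dh` forward to the Lebesgue measure `da db dc dφ`: the kinematic density
`dK = da ∧ db ∧ dc ∧ dφ` equals `dG ∧ dh = dp ∧ dθ ∧ dt ∧ dh`. -/
theorem kinemCoord_bijective_measure_preserving :
    Set.BijOn kinemCoord {q : ℝ × ℝ × ℝ × ℝ | q.2.1 ∈ Set.Ico (0 : ℝ) (2 * π)}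
        {q : (ℝ × ℝ × ℝ) × ℝ | q.2 ∈ Set.Ico (0 : ℝ) (2 * π)} ∧
      Measure.map kinemCoord
          (volume.restrict {q : ℝ × ℝ × ℝ × ℝ | q.2.1 ∈ Set.Ico (0 : ℝ) (2 * π)}) =
        volume.restrict {q : (ℝ × ℝ × ℝ) × ℝ | q.2 ∈ Set.Ico (0 : ℝ) (2 * π)} := by
  refine ⟨⟨fun q hq => hq, ?_, ?_⟩, ?_⟩
  · rintro ⟨p, θ, t, h⟩ _ ⟨p₂, θ₂, t₂, h₂⟩ _ heq
    simp only [kinemCoord, hLine, Prod.mk.injEq] at heq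
    obtain ⟨⟨h1, h2, h3⟩, rfl⟩ := heq
    have hs := Real.sin_sq_add_cos_sq θ
    have hp : p = p₂ := by
      linear_combination Real.cos θ * h1 + Real.sin θ * h2 - (p - p₂) * hs
    have hh : h = h₂ := by
      linear_combination Real.sin θ * h1 - Real.cos θ * h2 - (h - h₂) * hs
    subst hp hh
    have ht : t = t₂ := by linarith
    rw [ht]
  · rintro ⟨⟨a, b, c⟩, θ⟩ hθ
    have hs := Real.sin_sq_add_cos_sq θ
    refine ⟨(a * Real.cos θ + b * Real.sin θ, θ,
      c - (a * Real.sin θ - b * Real.cos θ) * (a * Real.cos θ + b * Real.sin θ),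
      a * Real.sin θ - b * Real.cos θ), hθ, ?_⟩
    simp only [kinemCoord, hLine, Prod.mk.injEq, and_true]
    refine ⟨?_, ?_, ?_⟩
    · linear_combination a * hs
    · linear_combination b * hs
    · ring
  · exact (kinemCoord_mp.restrict_preimage
      (measurable_snd measurableSet_Ico)).map_eq
end
end
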